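/- Let Q be a Euclidean quiver and V a rigid representation in rep(Q) that has an indecomposable summand which is not regular. Then V^⊥ contains no non-exceptional indecomposable representations; in particular V^⊥ is of finite representation type. -/

import Mathlib

open Matrix BigOperators

/-- A finite quiver: `n` vertices, `a` arrows with source and target maps. -/
structure FinQuiver where
  n : ℕ
  a : ℕ
  src : Fin a → Fin n
  tgt : Fin a → Fin n

namespace FinQuiver

/-- A finite quiver is acyclic iff it admits a topological ordering of vertices. -/
def Acyclic (Q : FinQuiver) : Prop :=
  ∃ h : Fin Q.n → ℕ, ∀ x, h (Q.src x) < h (Q.tgt x)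

/-- Connectivity of the underlying graph. -/
def Connected (Q : FinQuiver) : Prop :=
  ∀ S : Finset (Fin Q.n), S.Nonempty → S ≠ Finset.univ →
    ∃ x, (Q.src x ∈ S ∧ Q.tgt x ∉ S) ∨ (Q.tgt x ∈ S ∧ Q.src x ∉ S)

/-- The Euler form ⟨d,e⟩ = Σ_i d_i e_i − Σ_{α : i → j} d_i e_j. -/
def euler (Q : FinQuiver) (d e : Fin Q.n → ℤ) : ℤ :=
  (∑ i, d i * e i) - ∑ x, d (Q.src x) * e (Q.tgt x)

/-- A (possibly disconnected) Dynkin quiver: acyclic with positive definite Tits form. -/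
def IsDynkin (Q : FinQuiver) : Prop :=
  Q.Acyclic ∧ ∀ d : Fin Q.n → ℤ, d ≠ 0 → 0 < Q.euler d d

/-- `δ` is the null root: positive, isotropic, and every isotropic vector is an
integer multiple of `δ`. -/
def IsNullRoot (Q : FinQuiver) (δ : Fin Q.n → ℤ) : Prop :=
  (∀ i, 0 < δ i) ∧ Q.euler δ δ = 0 ∧
    ∀ d : Fin Q.n → ℤ, Q.euler d d = 0 → ∃ m : ℤ, d = m • δ

/-- A Euclidean (affine) quiver: connected, acyclic, positive semidefinite Tits form
with a null root. -/
def IsEuclidean (Q : FinQuiver) : Prop :=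
  Q.Acyclic ∧ Q.Connected ∧ (∀ d, 0 ≤ Q.euler d d) ∧ ∃ δ, Q.IsNullRoot δ

end FinQuiver

/-- A finite-dimensional representation of `Q` over `k`: dimensions at each vertex,
and a matrix for each arrow. -/
structure QRep (k : Type) [Field k] (Q : FinQuiver) where
  d : Fin Q.n → ℕ
  mat : ∀ x : Fin Q.a, Matrix (Fin (d (Q.tgt x))) (Fin (d (Q.src x))) k

namespace QRep

variable {k : Type} [Field k] {Q : FinQuiver}

/-- The dimension vector of a representation, as an integer vector. -/
def dimVec (M : QRep k Q) : Fin Q.n → ℤ := fun i => (M.d i : ℤ)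

/-- The space of morphisms of representations `M → N`. -/
def homSpace (M N : QRep k Q) :
    Submodule k (∀ i, Matrix (Fin (N.d i)) (Fin (M.d i)) k) where
  carrier := {f | ∀ x, f (Q.tgt x) * M.mat x = N.mat x * f (Q.src x)}
  add_mem' := by
    intro f g hf hg x
    simp only [Pi.add_apply, Matrix.add_mul, Matrix.mul_add, hf x, hg x]
  zero_mem' := by intro x; simp
  smul_mem' := by
    intro c f hf x
    simp only [Pi.smul_apply, Matrix.smul_mul, Matrix.mul_smul, hf x]

/-- The standard map whose kernel is `Hom(M,N)` and cokernel is `Ext¹(M,N)`. -/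
def extMap (M N : QRep k Q) :
    (∀ i, Matrix (Fin (N.d i)) (Fin (M.d i)) k) →ₗ[k]
    (∀ x : Fin Q.a, Matrix (Fin (N.d (Q.tgt x))) (Fin (M.d (Q.src x))) k) where
  toFun f := fun x => f (Q.tgt x) * M.mat x - N.mat x * f (Q.src x)
  map_add' := by
    intro f g; funext x
    simp only [Pi.add_apply, Matrix.add_mul, Matrix.mul_add]
    abel
  map_smul' := by
    intro c f; funext x
    simp only [Pi.smul_apply, Matrix.smul_mul, Matrix.mul_smul, RingHom.id_apply,
      smul_sub]

/-- dim_k Hom(M,N). -/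
noncomputable def homDim (M N : QRep k Q) : ℕ :=
  Module.finrank k (homSpace M N)

/-- dim_k Ext¹(M,N), defined as the dimension of the cokernel of `extMap`. -/
noncomputable def extDim (M N : QRep k Q) : ℕ :=
  Module.finrank k
    ((∀ x : Fin Q.a, Matrix (Fin (N.d (Q.tgt x))) (Fin (M.d (Q.src x))) k) ⧸
      LinearMap.range (extMap M N))

/-- Isomorphism of representations. -/
def IsoRep (M N : QRep k Q) : Prop :=
  ∃ f ∈ homSpace M N, ∀ i, Function.Bijective (Matrix.mulVecLin (f i))

/-- `L` is (the source of a monomorphism into) a subrepresentation of `M`. -/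
def IsSubrep (L M : QRep k Q) : Prop :=
  ∃ f ∈ homSpace L M, ∀ i, Function.Injective (Matrix.mulVecLin (f i))

/-- `L` is a direct summand of `M` (split monomorphism with retraction). -/
def IsSummand (L M : QRep k Q) : Prop :=
  ∃ f ∈ homSpace L M, ∃ g ∈ homSpace M L, ∀ i, g i * f i = 1

/-- `M` is indecomposable: nonzero, and its endomorphism ring has no nontrivial
idempotents. -/
def Indec (M : QRep k Q) : Prop :=
  (∃ i, M.d i ≠ 0) ∧
    ∀ f ∈ homSpace M M, (∀ i, f i * f i = f i) → f = 0 ∨ f = 1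

/-- An exceptional representation: indecomposable and rigid. -/
def Exceptional (M : QRep k Q) : Prop :=
  Indec M ∧ extDim M M = 0

/-- `(f, g)` form a short exact sequence `0 → A → B → C → 0` of representations. -/
def IsSES (A B C : QRep k Q)
    (f : ∀ i, Matrix (Fin (B.d i)) (Fin (A.d i)) k)
    (g : ∀ i, Matrix (Fin (C.d i)) (Fin (B.d i)) k) : Prop :=
  f ∈ homSpace A B ∧ g ∈ homSpace B C ∧
    ∀ i, Function.Injective (Matrix.mulVecLin (f i)) ∧
      Function.Surjective (Matrix.mulVecLin (g i)) ∧
      LinearMap.range (Matrix.mulVecLin (f i)) = LinearMap.ker (Matrix.mulVecLin (g i))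

/-- A thick (= abelian and extension-closed, since rep(Q) is hereditary) full
subcategory: closed under isomorphism, direct summands and two-out-of-three for
short exact sequences. -/
def Thick (P : QRep k Q → Prop) : Prop :=
  (∀ M N, IsoRep M N → P M → P N) ∧
  (∀ L M, IsSummand L M → P M → P L) ∧
  (∀ A B C f g, IsSES A B C f g →
    ((P A → P B → P C) ∧ (P A → P C → P B) ∧ (P B → P C → P A)))

/-- `P` is the smallest thick subcategory containing `S`. -/
def GeneratedBy (P : QRep k Q → Prop) (S : Set (QRep k Q)) : Prop :=
  Thick P ∧ (∀ X ∈ S, P X) ∧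
    ∀ P' : QRep k Q → Prop, Thick P' → (∀ X ∈ S, P' X) → ∀ M, P M → P' M

/-- An exceptional sequence. -/
def ExcSeq {r : ℕ} (E : Fin r → QRep k Q) : Prop :=
  (∀ i, Exceptional (E i) ∧ homDim (E i) (E i) = 1) ∧
    ∀ i j : Fin r, i < j → homDim (E i) (E j) = 0 ∧ extDim (E i) (E j) = 0

/-- King's criterion for `⟨d,−⟩`-semi-stability. -/
def SemiStable (d : Fin Q.n → ℤ) (M : QRep k Q) : Prop :=
  Q.euler d M.dimVec = 0 ∧ ∀ L : QRep k Q, IsSubrep L M → Q.euler d L.dimVec ≤ 0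

/-- `M` is regular: every indecomposable summand pairs to zero with the null root. -/
def RegularRep (δ : Fin Q.n → ℤ) (M : QRep k Q) : Prop :=
  ∀ L, IsSummand L M → Indec L → Q.euler δ L.dimVec = 0

/-- `M` is in the right perpendicular category of `V`. -/
def RPerp (V M : QRep k Q) : Prop := homDim V M = 0 ∧ extDim V M = 0

/-- `M` is in the left perpendicular category of `V`. -/
def LPerp (V M : QRep k Q) : Prop := homDim M V = 0 ∧ extDim M V = 0

/-- `P` is a projective representation (Ext¹(P,−) = 0). -/
def IsProjRep (P : QRep k Q) : Prop := ∀ M : QRep k Q, extDim P M = 0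

end QRep

/-- `α` is a Schur root: the dimension vector of an indecomposable representation
with trivial endomorphism ring. -/
def IsSchurRoot (k : Type) [Field k] (Q : FinQuiver) (α : Fin Q.n → ℤ) : Prop :=
  ∃ M : QRep k Q, M.dimVec = α ∧ QRep.Indec M ∧ QRep.homDim M M = 1

/-- `ext(α,β) = 0`: some representations of these dimension vectors have no
extensions. -/
def ExtZero (k : Type) [Field k] (Q : FinQuiver) (α β : Fin Q.n → ℤ) : Prop :=
  ∃ M N : QRep k Q, M.dimVec = α ∧ N.dimVec = β ∧ QRep.extDim M N = 0

/-- Kac's characterization of the canonical decomposition: `c` is the canonical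
decomposition of `d` iff the entries sum to `d`, are Schur roots, and are pairwise
ext-orthogonal. -/
def IsCanonDecomp (k : Type) [Field k] (Q : FinQuiver) (d : Fin Q.n → ℤ)
    (c : List (Fin Q.n → ℤ)) : Prop :=
  c.sum = d ∧ (∀ α ∈ c, IsSchurRoot k Q α) ∧
    ∀ i j : Fin c.length, i ≠ j → ExtZero k Q (c.get i) (c.get j)

/-!
Let `q` be the Tits form. The radical of `q` is `ℤδ`, and `⟨W, δ⟩ = -⟨δ, W⟩ ≠ 0`, so `q` is positive
definite on the dimension vectors orthogonal to `W`. By Ringel's descent, an indecomposable of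
`W^⊥` with a nonzero non-invertible endomorphism would yield a smaller indecomposable of `W^⊥` with
a nontrivial self-extension. By induction every indecomposable of `W^⊥` is thus a brick, and
`q > 0` forces it to have no self-extensions and `q = 1`. A positive definite form takes the value
`1` only finitely often, and a rigid brick is determined by its dimension vector: given two of
them, a generic point on the line joining them is isomorphic to both by the Happel–Ringel lemma.
-/

/-! ### Linear algebra and bilinear forms -/

theorem apply_add_apply_eq_zero_of_nonneg {L : Type*} [AddCommGroup L]
    (B : LinearMap.BilinForm ℤ L) (hB : ∀ x, 0 ≤ B x x) {x : L} (hx : B x x = 0) (y : L) :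
    B x y + B y x = 0 := by
  have hker : x ∈ LinearMap.ker (B + B.flip) :=
    ((B + B.flip).apply_apply_same_eq_zero_iff (fun z ↦ by simpa using hB z)
      ⟨fun z w ↦ by simp [add_comm]⟩).1 (by simp [hx])
  simpa using LinearMap.congr_fun hker y

theorem finite_setOf_apply_le_of_posDef {L : Type*} [AddCommGroup L] [Module.Finite ℤ L]
    (B : LinearMap.BilinForm ℤ L) (hB : ∀ x ≠ 0, 0 < B x x) (c : ℤ) :
    {x | B x x ≤ c}.Finite := by
  obtain ⟨s, hs⟩ := Module.Finite.fg_top (R := ℤ) (M := L)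
  set S : LinearMap.BilinForm ℤ L := B + B.flip with hS
  have hSB (x : L) : S x x = 2 * B x x := by simp [hS, two_mul]
  have hpos (x : L) : 0 ≤ S x x := by
    rcases eq_or_ne x 0 with rfl | hx
    · simp
    · have := hB x hx
      linarith [hSB x]
  have cauchySchwarz (x y : L) : S x y ^ 2 ≤ S x x * S y y :=
    S.apply_sq_le_of_symm hpos ⟨fun z w ↦ by simp [hS, add_comm]⟩ x y
  let bound (y : s) : ℤ := 2 * c * S y y
  refine Set.Finite.of_injOn (f := fun x (y : s) ↦ S x y)
    (t := Set.univ.pi fun y ↦ Set.Icc (-bound y) (bound y)) ?_ ?_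
    (Set.Finite.pi fun _ ↦ Set.finite_Icc _ _)
  · intro x hx y _
    have hle : S x y ^ 2 ≤ bound y :=
      (cauchySchwarz x y).trans (mul_le_mul_of_nonneg_right (by linarith [hSB x, hx.out]) (hpos y))
    exact ⟨by nlinarith [sq_nonneg (S x y + 1)], by nlinarith [sq_nonneg (S x y - 1)]⟩
  · intro x _ x' _ hxx'
    by_contra hne
    have hzero : S (x - x') = 0 := LinearMap.ext_on hs fun y hy ↦ by
      simpa [sub_eq_zero] using congrFun hxx' ⟨y, hy⟩
    have := hB _ (sub_ne_zero.2 hne)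
    have := hSB (x - x')
    simp only [hzero, LinearMap.zero_apply] at this
    linarith

theorem exists_rank_factorization {K m n : Type*} [Field K] [Fintype m] [Fintype n]
    (A : Matrix m n K) :
    ∃ (r : ℕ) (B : Matrix m (Fin r) K) (C : Matrix (Fin r) n K) (B' : Matrix (Fin r) m K)
      (C' : Matrix n (Fin r) K), B * C = A ∧ B' * B = 1 ∧ C * C' = 1 := by
  classical
  set f := Matrix.toLin' A
  let e := (Module.finBasis K (LinearMap.range f)).equivFun
  let incl := (LinearMap.range f).subtype ∘ₗ e.symm.toLinearMap
  let proj := e.toLinearMap ∘ₗ f.rangeRestrict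
  have hf : incl ∘ₗ proj = f := by ext; simp [incl, proj]
  obtain ⟨retr, hretr⟩ := incl.exists_leftInverse_of_injective
    (LinearMap.ker_eq_bot.2 ((Submodule.injective_subtype _).comp e.symm.injective))
  obtain ⟨sect, hsect⟩ := proj.exists_rightInverse_of_surjective
    (LinearMap.range_eq_top.2 (e.surjective.comp f.surjective_rangeRestrict))
  refine ⟨_, incl.toMatrix', proj.toMatrix', retr.toMatrix', sect.toMatrix', ?_, ?_, ?_⟩
  · rw [← LinearMap.toMatrix'_comp, hf, LinearMap.toMatrix'_toLin']
  · rw [← LinearMap.toMatrix'_comp, hretr, LinearMap.toMatrix'_id]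
  · rw [← LinearMap.toMatrix'_comp, hsect, LinearMap.toMatrix'_id]

/-- If `s` is a section of `f + t₀ • g`, then `f + t • g` is surjective unless `(t₀ - t)⁻¹` is an
eigenvalue of `g ∘ₗ s`. -/
theorem finite_setOf_not_surjective_add_smul {K E F : Type*} [Field K] [AddCommGroup E]
    [Module K E] [AddCommGroup F] [Module K F] [FiniteDimensional K F] (f g : E →ₗ[K] F) {t₀ : K}
    (h : Function.Surjective (f + t₀ • g)) :
    {t : K | ¬ Function.Surjective (f + t • g)}.Finite := by
  obtain ⟨s, hs⟩ := (f + t₀ • g).exists_rightInverse_of_surjective (LinearMap.range_eq_top.2 h)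
  refine ((Module.End.finite_spectrum (g ∘ₗ s)).preimage
    (f := fun t ↦ (t₀ - t)⁻¹) fun t _ t' _ htt' ↦ by simpa using htt').subset fun t ht ↦ ?_
  have hne : t₀ - t ≠ 0 := sub_ne_zero.2 fun h' ↦ ht (h' ▸ h)
  rw [Set.mem_preimage, spectrum.mem_iff]
  intro hunit
  have hcomp : (f + t • g) ∘ₗ s =
      (t₀ - t) • (algebraMap K (Module.End K F) (t₀ - t)⁻¹ - g ∘ₗ s) := by
    ext v
    have hv := LinearMap.congr_fun hs v
    simp only [LinearMap.comp_apply, LinearMap.add_apply, LinearMap.smul_apply,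
      LinearMap.id_apply] at hv
    simp only [LinearMap.comp_apply, LinearMap.add_apply, LinearMap.smul_apply,
      LinearMap.sub_apply, Module.algebraMap_end_apply, smul_sub, smul_inv_smul₀ hne]
    linear_combination (norm := module) hv
  have hsurj : Function.Surjective ((f + t • g) ∘ₗ s) := by
    rw [hcomp, LinearMap.coe_smul]
    exact (MulAction.surjective₀ hne).comp ((Module.End.isUnit_iff _).1 hunit).surjective
  exact ht (Function.Surjective.of_comp hsurj)

theorem exists_list_forall_mem_apply_eq {α β : Type*} {P : α → Prop} {f : α → β}
    (h : (f '' {a | P a}).Finite) : ∃ l : List α, ∀ a, P a → ∃ b ∈ l, P b ∧ f b = f a := by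
  obtain ⟨s, hsP, hs⟩ := Set.exists_subset_bijOn {a | P a} f
  refine ⟨((hs.finite_iff_finite).2 h).toFinset.toList, fun a ha ↦ ?_⟩
  obtain ⟨b, hb, hba⟩ := hs.surjOn (Set.mem_image_of_mem f ha)
  exact ⟨b, by simpa using hb, hsP hb, hba⟩

namespace FinQuiver

variable (Q : FinQuiver)

/-- The Euler form `FinQuiver.euler` as a bilinear form on the lattice of dimension vectors. -/
def eulerForm : LinearMap.BilinForm ℤ (Fin Q.n → ℤ) :=
  LinearMap.mk₂ ℤ Q.euler
    (fun d d' e ↦ by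
      simp only [euler, Pi.add_apply, add_mul, Finset.sum_add_distrib]
      ring)
    (fun c d e ↦ by
      simp only [euler, Pi.smul_apply, smul_eq_mul, mul_assoc, ← Finset.mul_sum, mul_sub])
    (fun d e e' ↦ by
      simp only [euler, Pi.add_apply, mul_add, Finset.sum_add_distrib]
      ring)
    (fun c d e ↦ by
      simp only [euler, Pi.smul_apply, smul_eq_mul, mul_left_comm _ c, ← Finset.mul_sum, mul_sub])

@[simp]
theorem eulerForm_apply (d e : Fin Q.n → ℤ) : Q.eulerForm d e = Q.euler d e := rfl

variable {Q}

/-- An isotropic vector is a multiple `m • δ`, and `⟨w, δ⟩ = -⟨δ, w⟩ ≠ 0` forces `m = 0`. -/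
theorem IsNullRoot.euler_self_pos {δ w d : Fin Q.n → ℤ} (hδ : Q.IsNullRoot δ)
    (hQ : ∀ e, 0 ≤ Q.euler e e) (hδw : Q.euler δ w ≠ 0) (hd : d ≠ 0) (hwd : Q.euler w d = 0) :
    0 < Q.euler d d := by
  refine (hQ d).lt_of_ne' fun hdd ↦ ?_
  obtain ⟨m, rfl⟩ := hδ.2.2 d hdd
  have hpolar : Q.euler δ w + Q.euler w δ = 0 :=
    apply_add_apply_eq_zero_of_nonneg Q.eulerForm hQ hδ.2.1 w
  have hm : m * Q.euler w δ = 0 := by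
    simpa using (map_smul (Q.eulerForm w) m δ).symm.trans hwd
  rcases mul_eq_zero.1 hm with rfl | h
  · simp at hd
  · omega

theorem finite_setOf_euler_self_le {w : Fin Q.n → ℤ}
    (h : ∀ d, d ≠ 0 → Q.euler w d = 0 → 0 < Q.euler d d) (c : ℤ) :
    {d | Q.euler w d = 0 ∧ Q.euler d d ≤ c}.Finite := by
  let perp := LinearMap.ker (Q.eulerForm w)
  have hfin := finite_setOf_apply_le_of_posDef (Q.eulerForm.restrict perp)
    (fun d hd ↦ h d (by simpa using hd) d.2) c
  exact (hfin.image Subtype.val).subset fun d hd ↦ ⟨⟨d, hd.1⟩, hd.2, rfl⟩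

end FinQuiver

/-! ### The category of representations -/

namespace QRep

open CategoryTheory

variable {k : Type} [Field k] {Q : FinQuiver} {K L M N V W X Y Z : QRep k Q}

instance : Category (QRep k Q) where
  Hom M N := homSpace M N
  id M := ⟨fun _ ↦ 1, fun x ↦ by simp⟩
  comp f g := ⟨fun i ↦ g.1 i * f.1 i, fun x ↦ by
    rw [Matrix.mul_assoc, f.2 x, ← Matrix.mul_assoc, g.2 x, Matrix.mul_assoc]⟩
  id_comp f := Subtype.ext (funext fun _ ↦ Matrix.mul_one _)
  comp_id f := Subtype.ext (funext fun _ ↦ Matrix.one_mul _)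
  assoc f g h := Subtype.ext (funext fun _ ↦ (Matrix.mul_assoc _ _ _).symm)

/-- The component of a morphism of representations at a vertex. -/
def app (f : M ⟶ N) (i : Fin Q.n) : Matrix (Fin (N.d i)) (Fin (M.d i)) k := f.1 i

theorem app_mul_mat (f : M ⟶ N) (x : Fin Q.a) :
    app f (Q.tgt x) * M.mat x = N.mat x * app f (Q.src x) := f.2 x

/-- The morphism of representations with the given components. -/
def homMk (f : ∀ i, Matrix (Fin (N.d i)) (Fin (M.d i)) k)
    (hf : ∀ x, f (Q.tgt x) * M.mat x = N.mat x * f (Q.src x)) : M ⟶ N := ⟨f, hf⟩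

@[simp]
theorem app_homMk (f : ∀ i, Matrix (Fin (N.d i)) (Fin (M.d i)) k)
    (hf : ∀ x, f (Q.tgt x) * M.mat x = N.mat x * f (Q.src x)) (i : Fin Q.n) :
    app (homMk f hf) i = f i := rfl

@[ext]
theorem hom_ext {f g : M ⟶ N} (h : ∀ i, app f i = app g i) : f = g := Subtype.ext (funext h)

instance : Preadditive (QRep k Q) where
  homGroup M N := inferInstanceAs (AddCommGroup (homSpace M N))
  add_comp _ _ _ f f' g := hom_ext fun i ↦ Matrix.mul_add (app g i) (app f i) (app f' i)
  comp_add _ _ _ f g g' := hom_ext fun i ↦ Matrix.add_mul (app g i) (app g' i) (app f i)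

instance : Linear k (QRep k Q) where
  homModule M N := inferInstanceAs (Module k (homSpace M N))
  smul_comp _ _ _ c f g := hom_ext fun i ↦ Matrix.mul_smul (app g i) c (app f i)
  comp_smul _ _ _ f c g := hom_ext fun i ↦ Matrix.smul_mul c (app g i) (app f i)

instance (M N : QRep k Q) : FiniteDimensional k (M ⟶ N) :=
  inferInstanceAs (FiniteDimensional k (homSpace M N))

@[simp] theorem app_id (i : Fin Q.n) : app (𝟙 M) i = 1 := rfl

@[simp] theorem app_comp (f : L ⟶ M) (g : M ⟶ N) (i : Fin Q.n) :
    app (f ≫ g) i = app g i * app f i := rfl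

@[simp] theorem app_zero (i : Fin Q.n) : app (0 : M ⟶ N) i = 0 := rfl

@[simp] theorem app_add (f g : M ⟶ N) (i : Fin Q.n) : app (f + g) i = app f i + app g i := rfl

theorem homDim_eq_zero_iff : homDim M N = 0 ↔ ∀ f : M ⟶ N, f = 0 :=
  finrank_zero_iff_forall_zero

theorem extDim_eq_zero_iff : extDim M N = 0 ↔ Function.Surjective (extMap M N) := by
  rw [extDim, Module.finrank_zero_iff, Submodule.Quotient.subsingleton_iff,
    LinearMap.range_eq_top]

theorem ker_extMap : LinearMap.ker (extMap M N) = homSpace M N := by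
  ext f
  exact ⟨fun hf x ↦ sub_eq_zero.1 (congrFun hf x), fun hf ↦ funext fun x ↦ sub_eq_zero.2 (hf x)⟩

theorem euler_dimVec (M N : QRep k Q) :
    Q.euler M.dimVec N.dimVec = homDim M N - extDim M N := by
  have hrank := (extMap M N).finrank_range_add_finrank_ker
  have hcoker := (LinearMap.range (extMap M N)).finrank_quotient_add_finrank
  rw [ker_extMap] at hrank
  simp only [Module.finrank_pi_fintype, Module.finrank_matrix, Fintype.card_fin,
    Module.finrank_self, mul_one] at hrank hcoker
  simp only [FinQuiver.euler, dimVec, homDim, extDim, mul_comm (M.d _ : ℤ)]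
  zify at hrank hcoker
  linarith

/-! ### Morphisms and short exact sequences -/

theorem extMap_app (f : M ⟶ N) : extMap M N (app f) = 0 :=
  funext fun x ↦ sub_eq_zero.2 (app_mul_mat f x)

theorem exists_app_eq_of_extMap_eq_zero {h : ∀ i, Matrix (Fin (N.d i)) (Fin (M.d i)) k}
    (hh : extMap M N h = 0) : ∃ f : M ⟶ N, app f = h :=
  ⟨homMk h fun x ↦ sub_eq_zero.1 (congrFun hh x), rfl⟩

theorem extMap_mul_app (f : L ⟶ M) (h : ∀ i, Matrix (Fin (N.d i)) (Fin (M.d i)) k) :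
    extMap L N (fun i ↦ h i * app f i) = fun x ↦ extMap M N h x * app f (Q.src x) := by
  funext x
  simp only [extMap, LinearMap.coe_mk, AddHom.coe_mk, Matrix.sub_mul, Matrix.mul_assoc,
    app_mul_mat]

theorem extMap_app_mul (g : N ⟶ L) (h : ∀ i, Matrix (Fin (N.d i)) (Fin (M.d i)) k) :
    extMap M L (fun i ↦ app g i * h i) = fun x ↦ app g (Q.tgt x) * extMap M N h x := by
  funext x
  simp only [extMap, LinearMap.coe_mk, AddHom.coe_mk, Matrix.mul_sub, ← Matrix.mul_assoc,
    app_mul_mat]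

/-- A morphism all of whose components are split monomorphisms of vector spaces, that is, a
monomorphism of representations. -/
def IsVertexMono (f : M ⟶ N) : Prop :=
  ∃ s : ∀ i, Matrix (Fin (M.d i)) (Fin (N.d i)) k, ∀ i, s i * app f i = 1

/-- A morphism all of whose components are split epimorphisms of vector spaces, that is, an
epimorphism of representations. -/
def IsVertexEpi (f : M ⟶ N) : Prop :=
  ∃ s : ∀ i, Matrix (Fin (M.d i)) (Fin (N.d i)) k, ∀ i, app f i * s i = 1

/-- A short exact sequence `0 ⟶ K ⟶ X ⟶ Y ⟶ 0`, expressed by a splitting `X = K ⊕ Y` of the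
vector space at each vertex. -/
def IsShortExact (f : K ⟶ X) (p : X ⟶ Y) : Prop :=
  ∃ (s : ∀ i, Matrix (Fin (K.d i)) (Fin (X.d i)) k) (t : ∀ i, Matrix (Fin (X.d i)) (Fin (Y.d i)) k),
    ∀ i, s i * app f i = 1 ∧ app p i * t i = 1 ∧ app f i * s i + t i * app p i = 1

/-- The total dimension of a representation, by which the inductions run. -/
def totalDim (M : QRep k Q) : ℕ := ∑ i, M.d i

theorem IsVertexMono.mono {f : M ⟶ N} (hf : IsVertexMono f) : Mono f := by
  obtain ⟨s, hs⟩ := hf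
  refine ⟨fun g g' h ↦ hom_ext fun i ↦ ?_⟩
  have hi : app f i * app g i = app f i * app g' i := congrArg (app · i) h
  simpa [← Matrix.mul_assoc, hs] using congrArg (s i * ·) hi

theorem IsVertexEpi.epi {f : M ⟶ N} (hf : IsVertexEpi f) : Epi f := by
  obtain ⟨s, hs⟩ := hf
  refine ⟨fun g g' h ↦ hom_ext fun i ↦ ?_⟩
  have hi : app g i * app f i = app g' i * app f i := congrArg (app · i) h
  simpa [Matrix.mul_assoc, hs] using congrArg (· * s i) hi

theorem IsVertexMono.comp {f : L ⟶ M} {g : M ⟶ N} (hf : IsVertexMono f) (hg : IsVertexMono g) :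
    IsVertexMono (f ≫ g) := by
  obtain ⟨s, hs⟩ := hf
  obtain ⟨t, ht⟩ := hg
  refine ⟨fun i ↦ s i * t i, fun i ↦ ?_⟩
  rw [app_comp, Matrix.mul_assoc, ← Matrix.mul_assoc (t i), ht, Matrix.one_mul, hs]

theorem IsVertexEpi.comp {f : L ⟶ M} {g : M ⟶ N} (hf : IsVertexEpi f) (hg : IsVertexEpi g) :
    IsVertexEpi (f ≫ g) := by
  obtain ⟨s, hs⟩ := hf
  obtain ⟨t, ht⟩ := hg
  refine ⟨fun i ↦ s i * t i, fun i ↦ ?_⟩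
  rw [app_comp, Matrix.mul_assoc, ← Matrix.mul_assoc (app f i), hs, Matrix.one_mul, ht]

theorem isVertexMono_of_comp {f : L ⟶ M} {g : M ⟶ N} (h : IsVertexMono (f ≫ g)) :
    IsVertexMono f := by
  obtain ⟨s, hs⟩ := h
  exact ⟨fun i ↦ s i * app g i, fun i ↦ by rw [Matrix.mul_assoc, ← app_comp, hs]⟩

theorem isVertexEpi_of_comp {f : L ⟶ M} {g : M ⟶ N} (h : IsVertexEpi (f ≫ g)) :
    IsVertexEpi g := by
  obtain ⟨s, hs⟩ := h
  exact ⟨fun i ↦ app f i * s i, fun i ↦ by rw [← Matrix.mul_assoc, ← app_comp, hs]⟩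

theorem isVertexMono_of_isIso (f : M ⟶ N) [IsIso f] : IsVertexMono f :=
  ⟨app (inv f), fun i ↦ by rw [← app_comp, IsIso.hom_inv_id, app_id]⟩

theorem isVertexEpi_of_isIso (f : M ⟶ N) [IsIso f] : IsVertexEpi f :=
  ⟨app (inv f), fun i ↦ by rw [← app_comp, IsIso.inv_hom_id, app_id]⟩

theorem isVertexMono_retract_i (h : Retract M N) : IsVertexMono h.i :=
  isVertexMono_of_comp (g := h.r) (h.retract ▸ isVertexMono_of_isIso _)

theorem isVertexEpi_retract_r (h : Retract M N) : IsVertexEpi h.r :=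
  isVertexEpi_of_comp (f := h.i) (h.retract ▸ isVertexEpi_of_isIso _)

theorem IsVertexMono.d_le {f : M ⟶ N} (hf : IsVertexMono f) (i : Fin Q.n) : M.d i ≤ N.d i := by
  obtain ⟨s, hs⟩ := hf
  refine le_of_fin_injective k (app f i).mulVecLin
    (Function.LeftInverse.injective (g := (s i).mulVecLin) fun v ↦ ?_)
  simp [hs]

theorem IsVertexEpi.d_le {f : M ⟶ N} (hf : IsVertexEpi f) (i : Fin Q.n) : N.d i ≤ M.d i := by
  obtain ⟨s, hs⟩ := hf
  refine le_of_fin_surjective k (app f i).mulVecLin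
    (Function.RightInverse.surjective (g := (s i).mulVecLin) fun v ↦ ?_)
  simp [hs]

theorem isIso_of_app_inverse {f : M ⟶ N} {s : ∀ i, Matrix (Fin (M.d i)) (Fin (N.d i)) k}
    (hsf : ∀ i, s i * app f i = 1) (hfs : ∀ i, app f i * s i = 1) : IsIso f := by
  refine ⟨homMk s fun x ↦ ?_, hom_ext hsf, hom_ext hfs⟩
  calc s (Q.tgt x) * N.mat x
      = s (Q.tgt x) * (N.mat x * app f (Q.src x)) * s (Q.src x) := by
        rw [Matrix.mul_assoc, Matrix.mul_assoc, hfs, Matrix.mul_one]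
    _ = M.mat x * s (Q.src x) := by
        rw [← app_mul_mat, ← Matrix.mul_assoc, hsf, Matrix.one_mul]

theorem IsVertexMono.totalDim_le {f : M ⟶ N} (hf : IsVertexMono f) : totalDim M ≤ totalDim N :=
  Finset.sum_le_sum fun i _ ↦ hf.d_le i

theorem IsVertexEpi.totalDim_le {f : M ⟶ N} (hf : IsVertexEpi f) : totalDim N ≤ totalDim M :=
  Finset.sum_le_sum fun i _ ↦ hf.d_le i

theorem IsVertexMono.isIso {f : M ⟶ N} (hf : IsVertexMono f) (h : totalDim N ≤ totalDim M) :
    IsIso f := by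
  have hd (i : Fin Q.n) : M.d i = N.d i :=
    (Finset.sum_eq_sum_iff_of_le fun i _ ↦ hf.d_le i).1 (hf.totalDim_le.antisymm h) i
      (Finset.mem_univ i)
  obtain ⟨s, hs⟩ := hf
  exact isIso_of_app_inverse hs fun i ↦ (Matrix.mul_eq_one_comm_of_equiv (finCongr (hd i))).1 (hs i)

theorem IsVertexEpi.isIso {f : M ⟶ N} (hf : IsVertexEpi f) (h : totalDim M ≤ totalDim N) :
    IsIso f := by
  have hd (i : Fin Q.n) : N.d i = M.d i :=
    (Finset.sum_eq_sum_iff_of_le fun i _ ↦ hf.d_le i).1 (hf.totalDim_le.antisymm h) i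
      (Finset.mem_univ i)
  obtain ⟨s, hs⟩ := hf
  exact isIso_of_app_inverse
    (fun i ↦ (Matrix.mul_eq_one_comm_of_equiv (finCongr (hd i))).1 (hs i)) hs

theorem isoRep_of_iso (e : M ≅ N) : IsoRep M N := by
  refine ⟨app e.hom, app_mul_mat e.hom, fun i ↦
    Function.bijective_iff_has_inverse.2 ⟨(app e.inv i).mulVecLin, fun v ↦ ?_, fun v ↦ ?_⟩⟩
  · simp [← app_comp]
  · simp [← app_comp]

theorem isSummand_iff_nonempty_retract : IsSummand M N ↔ Nonempty (Retract M N) :=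
  ⟨fun ⟨f, hf, g, hg, hgf⟩ ↦ ⟨⟨homMk f hf, homMk g hg, hom_ext hgf⟩⟩,
    fun ⟨h⟩ ↦ ⟨_, app_mul_mat h.i, _, app_mul_mat h.r, fun i ↦ congrArg (app · i) h.retract⟩⟩

theorem homDim_eq_zero_of_mono (f : Y ⟶ X) [Mono f] (h : homDim W X = 0) : homDim W Y = 0 :=
  homDim_eq_zero_iff.2 fun g ↦ Limits.zero_of_comp_mono f (homDim_eq_zero_iff.1 h (g ≫ f))

theorem homDim_eq_zero_of_epi (f : V ⟶ W) [Epi f] (h : homDim V X = 0) : homDim W X = 0 :=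
  homDim_eq_zero_iff.2 fun g ↦ Limits.zero_of_epi_comp f (homDim_eq_zero_iff.1 h (f ≫ g))

theorem extDim_eq_zero_of_isVertexMono {f : K ⟶ X} (hf : IsVertexMono f) (h : extDim X Z = 0) :
    extDim K Z = 0 := by
  obtain ⟨s, hs⟩ := hf
  rw [extDim_eq_zero_iff] at h ⊢
  intro c
  obtain ⟨g, hg⟩ := h fun x ↦ c x * s (Q.src x)
  refine ⟨fun i ↦ g i * app f i, ?_⟩
  rw [extMap_mul_app, hg]
  exact funext fun x ↦ by rw [Matrix.mul_assoc, hs, Matrix.mul_one]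

theorem extDim_eq_zero_of_isVertexEpi {f : X ⟶ Y} (hf : IsVertexEpi f) (h : extDim W X = 0) :
    extDim W Y = 0 := by
  obtain ⟨s, hs⟩ := hf
  rw [extDim_eq_zero_iff] at h ⊢
  intro c
  obtain ⟨g, hg⟩ := h fun x ↦ s (Q.tgt x) * c x
  refine ⟨fun i ↦ app f i * g i, ?_⟩
  rw [extMap_app_mul, hg]
  exact funext fun x ↦ by rw [← Matrix.mul_assoc, hs, Matrix.one_mul]

theorem RPerp.of_retract_right (h : RPerp W X) (r : Retract Y X) : RPerp W Y :=
  ⟨homDim_eq_zero_of_mono r.i h.1, extDim_eq_zero_of_isVertexEpi (isVertexEpi_retract_r r) h.2⟩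

theorem RPerp.of_retract_left (h : RPerp V X) (r : Retract W V) : RPerp W X :=
  ⟨homDim_eq_zero_of_epi r.r h.1, extDim_eq_zero_of_isVertexMono (isVertexMono_retract_i r) h.2⟩

theorem IsVertexMono.naturality {f : K ⟶ X} (hf : IsVertexMono f) {g : L ⟶ X}
    {h : ∀ i, Matrix (Fin (K.d i)) (Fin (L.d i)) k} (hg : ∀ i, app f i * h i = app g i)
    (x : Fin Q.a) : h (Q.tgt x) * L.mat x = K.mat x * h (Q.src x) := by
  obtain ⟨s, hs⟩ := hf
  have hfx : app f (Q.tgt x) * (h (Q.tgt x) * L.mat x) =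
      app f (Q.tgt x) * (K.mat x * h (Q.src x)) := by
    rw [← Matrix.mul_assoc, hg, app_mul_mat, ← hg, ← Matrix.mul_assoc, ← Matrix.mul_assoc,
      app_mul_mat]
  simpa only [← Matrix.mul_assoc, hs, Matrix.one_mul] using congrArg (s (Q.tgt x) * ·) hfx

theorem exists_vertexEpi_comp_vertexMono (f : M ⟶ N) :
    ∃ (I : QRep k Q) (p : M ⟶ I) (m : I ⟶ N), IsVertexEpi p ∧ IsVertexMono m ∧ p ≫ m = f := by
  choose r B C B' C' hBC hB hC using fun i ↦ exists_rank_factorization (app f i)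
  let I : QRep k Q := ⟨r, fun x ↦ C (Q.tgt x) * M.mat x * C' (Q.src x)⟩
  let m : I ⟶ N := homMk B fun x ↦ by
    rw [← Matrix.mul_assoc, ← Matrix.mul_assoc, hBC, app_mul_mat, ← hBC, Matrix.mul_assoc,
      Matrix.mul_assoc, hC, Matrix.mul_one]
  have hm : IsVertexMono m := ⟨B', hB⟩
  have hmC (i : Fin Q.n) : app m i * C i = app f i := hBC i
  let p : M ⟶ I := homMk C (hm.naturality hmC)
  exact ⟨I, p, m, ⟨C', hC⟩, hm, hom_ext hmC⟩

/-- At each vertex, the kernel of `p` is the image of the idempotent `1 - t * p`, where `t` is a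
section of `p`. -/
theorem IsVertexEpi.exists_isShortExact {p : X ⟶ Y} (hp : IsVertexEpi p) :
    ∃ (K : QRep k Q) (f : K ⟶ X), IsShortExact f p := by
  obtain ⟨t, ht⟩ := hp
  choose r B C B' C' hBC hB hC using fun i ↦ exists_rank_factorization (1 - t i * app p i)
  have hpB (i : Fin Q.n) : app p i * B i = 0 := by
    have hpBC : app p i * (B i * C i) = 0 := by
      rw [hBC, Matrix.mul_sub, ← Matrix.mul_assoc, ht, Matrix.mul_one, Matrix.one_mul, sub_self]
    simpa only [Matrix.mul_assoc, hC, Matrix.mul_one, Matrix.zero_mul] using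
      congrArg (· * C' i) hpBC
  have hCB (i : Fin Q.n) : C i * B i = 1 := by
    have hBCB : B i * (C i * B i) = B i := by
      rw [← Matrix.mul_assoc, hBC, Matrix.sub_mul, Matrix.mul_assoc, hpB, Matrix.mul_zero,
        Matrix.one_mul, sub_zero]
    simpa only [← Matrix.mul_assoc, hB, Matrix.one_mul] using congrArg (B' i * ·) hBCB
  refine ⟨⟨r, fun x ↦ C (Q.tgt x) * X.mat x * B (Q.src x)⟩, homMk B fun x ↦ ?_,
    C, t, fun i ↦ ⟨hCB i, ht i, ?_⟩⟩
  · calc B (Q.tgt x) * (C (Q.tgt x) * X.mat x * B (Q.src x))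
        = X.mat x * B (Q.src x) - t (Q.tgt x) * (app p (Q.tgt x) * X.mat x * B (Q.src x)) := by
          simp only [← Matrix.mul_assoc, hBC, Matrix.sub_mul, Matrix.one_mul]
      _ = X.mat x * B (Q.src x) := by
          rw [app_mul_mat, Matrix.mul_assoc, hpB, Matrix.mul_zero, Matrix.mul_zero, sub_zero]
  · rw [app_homMk, hBC, sub_add_cancel]

theorem IsShortExact.isVertexMono {f : K ⟶ X} {p : X ⟶ Y} (h : IsShortExact f p) :
    IsVertexMono f :=
  let ⟨s, _, hst⟩ := h
  ⟨s, fun i ↦ (hst i).1⟩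

theorem IsShortExact.comp_eq_zero {f : K ⟶ X} {p : X ⟶ Y} (h : IsShortExact f p) : f ≫ p = 0 := by
  obtain ⟨s, t, hst⟩ := h
  refine hom_ext fun i ↦ ?_
  obtain ⟨hs, ht, hsum⟩ := hst i
  have hpfs : app p i * (app f i * s i) = 0 := by
    rw [eq_sub_of_add_eq hsum, Matrix.mul_sub, ← Matrix.mul_assoc, ht, Matrix.mul_one,
      Matrix.one_mul, sub_self]
  simpa [Matrix.mul_assoc, hs] using congrArg (· * app f i) hpfs

theorem IsShortExact.exists_app_mul_eq {f : K ⟶ X} {p : X ⟶ Y} (h : IsShortExact f p)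
    {g : ∀ i, Matrix (Fin (X.d i)) (Fin (L.d i)) k} (hg : ∀ i, app p i * g i = 0) :
    ∃ g' : ∀ i, Matrix (Fin (K.d i)) (Fin (L.d i)) k, ∀ i, app f i * g' i = g i := by
  obtain ⟨s, t, hst⟩ := h
  refine ⟨fun i ↦ s i * g i, fun i ↦ ?_⟩
  rw [← Matrix.mul_assoc, eq_sub_of_add_eq (hst i).2.2, Matrix.sub_mul, Matrix.mul_assoc, hg,
    Matrix.mul_zero, Matrix.one_mul, sub_zero]

theorem IsShortExact.exists_comp_eq {f : K ⟶ X} {p : X ⟶ Y} (h : IsShortExact f p) {g : L ⟶ X}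
    (hg : g ≫ p = 0) : ∃ g' : L ⟶ K, g' ≫ f = g := by
  obtain ⟨g', hg'⟩ := h.exists_app_mul_eq (g := app g) fun i ↦ congrArg (app · i) hg
  exact ⟨homMk g' (h.isVertexMono.naturality hg'), hom_ext hg'⟩

theorem IsShortExact.extDim_eq_zero {f : K ⟶ X} {p : X ⟶ Y} (h : IsShortExact f p)
    (hhom : homDim W Y = 0) (hext : extDim W X = 0) : extDim W K = 0 := by
  rw [extDim_eq_zero_iff] at hext ⊢
  intro c
  obtain ⟨g, hg⟩ := hext fun x ↦ app f (Q.tgt x) * c x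
  have hpg : extMap W Y (fun i ↦ app p i * g i) = 0 := by
    rw [extMap_app_mul, hg]
    funext x
    rw [← Matrix.mul_assoc, ← app_comp, h.comp_eq_zero, app_zero, Matrix.zero_mul, Pi.zero_apply]
  obtain ⟨q, hq⟩ := exists_app_eq_of_extMap_eq_zero hpg
  rw [homDim_eq_zero_iff.1 hhom q] at hq
  obtain ⟨g', hg'⟩ := h.exists_app_mul_eq fun i ↦ (congrFun hq i).symm
  refine ⟨g', funext fun x ↦ ?_⟩
  rw [← funext hg', extMap_app_mul] at hg
  obtain ⟨s, hs⟩ := h.isVertexMono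
  simpa only [← Matrix.mul_assoc, hs, Matrix.one_mul] using
    congrArg (s (Q.tgt x) * ·) (congrFun hg x)

theorem IsShortExact.exists_comp_eq_of_extDim_eq_zero {f : K ⟶ X} {p : X ⟶ Y}
    (h : IsShortExact f p) (hext : extDim Y Z = 0) (b : K ⟶ Z) : ∃ g : X ⟶ Z, f ≫ g = b := by
  have hfp (i : Fin Q.n) : app p i * app f i = 0 := congrArg (app · i) h.comp_eq_zero
  obtain ⟨s, t, hst⟩ := h
  have hbsf (i : Fin Q.n) : app b i * s i * app f i = app b i := by
    rw [Matrix.mul_assoc, (hst i).1, Matrix.mul_one]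
  set c := extMap X Z fun i ↦ app b i * s i with hc
  have hcf (x : Fin Q.a) : c x * app f (Q.src x) = 0 := by
    have := congrFun (extMap_mul_app f fun i ↦ app b i * s i) x
    simpa only [hbsf, extMap_app, Pi.zero_apply, ← hc] using this.symm
  have hctp (x : Fin Q.a) : c x * t (Q.src x) * app p (Q.src x) = c x := by
    rw [Matrix.mul_assoc, eq_sub_of_add_eq' (hst _).2.2, Matrix.mul_sub, ← Matrix.mul_assoc, hcf,
      Matrix.zero_mul, Matrix.mul_one, sub_zero]
  obtain ⟨e, he⟩ := extDim_eq_zero_iff.1 hext fun x ↦ c x * t (Q.src x)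
  obtain ⟨g, hg⟩ : ∃ g : X ⟶ Z, app g = fun i ↦ app b i * s i - e i * app p i := by
    refine exists_app_eq_of_extMap_eq_zero ?_
    rw [show (fun i ↦ app b i * s i - e i * app p i) =
      (fun i ↦ app b i * s i) - fun i ↦ e i * app p i from rfl, map_sub, extMap_mul_app, he, ← hc,
      funext hctp, sub_self]
  refine ⟨g, hom_ext fun i ↦ ?_⟩
  rw [app_comp, hg, Matrix.sub_mul, hbsf, Matrix.mul_assoc, hfp, Matrix.mul_zero, sub_zero]

/-! ### Ringel's descent -/

instance : IsIdempotentComplete (QRep k Q) where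
  idempotents_split X e he := by
    obtain ⟨I, p, m, hp, hm, rfl⟩ := exists_vertexEpi_comp_vertexMono e
    have := hp.epi
    have := hm.mono
    refine ⟨I, m, p, ?_, rfl⟩
    rw [← cancel_epi p, ← cancel_mono m]
    simpa using he

theorem indec_iff : Indec M ↔ 𝟙 M ≠ 0 ∧ ∀ e : M ⟶ M, e ≫ e = e → e = 0 ∨ e = 𝟙 M := by
  refine and_congr ⟨fun ⟨i, hi⟩ h ↦ ?_, fun h ↦ ?_⟩ ⟨fun h e he ↦ ?_, fun h e he hee ↦ ?_⟩
  · have : NeZero (M.d i) := ⟨hi⟩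
    exact one_ne_zero (congrArg (app · i) h)
  · by_contra! hd
    refine h (hom_ext fun i ↦ ?_)
    have : IsEmpty (Fin (M.d i)) := by rw [hd i]; infer_instance
    exact Subsingleton.elim _ _
  · exact (h e.1 e.2 fun i ↦ congrArg (app · i) he).imp Subtype.ext Subtype.ext
  · exact (h ⟨e, he⟩ (hom_ext hee)).imp (congrArg Subtype.val) (congrArg Subtype.val)

theorem Indec.totalDim_le_of_retract (hX : Indec X) (r : Retract Y X) (hY : 𝟙 Y ≠ 0) :
    totalDim X ≤ totalDim Y := by
  rcases (indec_iff.1 hX).2 (r.r ≫ r.i) (by simp) with h | h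
  · refine absurd ?_ hY
    calc 𝟙 Y = r.i ≫ (r.r ≫ r.i) ≫ r.r := by simp
      _ = 0 := by rw [h, Limits.zero_comp, Limits.comp_zero]
  · exact (isVertexMono_retract_i ⟨r.r, r.i, h⟩).totalDim_le

/-- One of the summands of a Krull–Schmidt decomposition of `K`. -/
theorem exists_indec_retract_comp_ne_zero {j : L ⟶ K} (hj : j ≠ 0) :
    ∃ (Y : QRep k Q) (r : Retract Y K), Indec Y ∧ j ≫ r.r ≠ 0 := by
  induction hn : totalDim K using Nat.strong_induction_on generalizing K with
  | _ n ih =>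
  subst hn
  by_cases hK : Indec K
  · exact ⟨K, .refl K, hK, by simpa using hj⟩
  have hK_ne : 𝟙 K ≠ 0 := fun h ↦ hj (by rw [← Category.comp_id j, h, Limits.comp_zero])
  obtain ⟨e, hee, he_ne, hje⟩ : ∃ e : K ⟶ K, e ≫ e = e ∧ e ≠ 𝟙 K ∧ j ≫ e ≠ 0 := by
    simp only [indec_iff, hK_ne, ne_eq, not_false_eq_true, true_and, not_forall, not_or] at hK
    obtain ⟨e, hee, he0, he1⟩ := hK
    by_cases hje : j ≫ e = 0
    · exact ⟨𝟙 K - e, by simp [hee], by simpa using he0, by simpa [hje] using hj⟩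
    · exact ⟨e, hee, he1, hje⟩
  obtain ⟨J, i, p, hip, hpi⟩ := IsIdempotentComplete.idempotents_split K e hee
  have hi : IsVertexMono i := isVertexMono_retract_i ⟨i, p, hip⟩
  have hlt : totalDim J < totalDim K := by
    by_contra! hle
    have := hi.isIso hle
    have : p = inv i := by rw [← cancel_epi i, hip, IsIso.hom_inv_id]
    exact he_ne (by rw [← hpi, this, IsIso.inv_hom_id])
  obtain ⟨Y, r, hY, hr⟩ := ih _ hlt (j := j ≫ p)
    (fun h ↦ hje (by rw [← hpi, ← Category.assoc, h, Limits.zero_comp])) rfl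
  exact ⟨Y, r.trans ⟨i, p, hip⟩, hY, by simpa using hr⟩

theorem IsShortExact.totalDim_lt {f : K ⟶ X} {p : X ⟶ Y} (h : IsShortExact f p) (hp : p ≠ 0) :
    totalDim K < totalDim X := by
  by_contra! hle
  have := h.isVertexMono.isIso hle
  exact hp (Limits.zero_of_epi_comp f h.comp_eq_zero)

/-- Up to isomorphism, `I` is the image of a nonzero endomorphism of `X`. -/
def IsEndImage (X I : QRep k Q) : Prop :=
  𝟙 I ≠ 0 ∧ (∃ p : X ⟶ I, IsVertexEpi p) ∧ ∃ m : I ⟶ X, IsVertexMono m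

theorem exists_isEndImage_totalDim_lt {f : X ⟶ X} (hf : f ≠ 0) (hf' : ¬ IsIso f) :
    ∃ I, IsEndImage X I ∧ totalDim I < totalDim X := by
  obtain ⟨I, p, m, hp, hm, rfl⟩ := exists_vertexEpi_comp_vertexMono f
  refine ⟨I, ⟨fun h ↦ hf ?_, ⟨p, hp⟩, m, hm⟩, ?_⟩
  · rw [← Category.comp_id p, h, Limits.comp_zero, Limits.zero_comp]
  · by_contra! hle
    have := hp.isIso hle
    have := hm.isIso hle
    exact hf' inferInstance

theorem isVertexMono_of_minimalFor_isEndImage {I : QRep k Q}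
    (hI : MinimalFor (IsEndImage X) totalDim I) {z : Z ⟶ X} (hz : IsVertexMono z) {g : I ⟶ Z}
    (hg : g ≠ 0) : IsVertexMono g := by
  obtain ⟨-, ⟨p, hp⟩, -⟩ := hI.1
  obtain ⟨J, q, m, hq, hm, rfl⟩ := exists_vertexEpi_comp_vertexMono g
  have hJ : 𝟙 J ≠ 0 := fun h ↦ hg (by
    rw [← Category.comp_id q, h, Limits.comp_zero, Limits.zero_comp])
  have := hq.isIso (hI.2 ⟨hJ, ⟨_, hp.comp hq⟩, _, hm.comp hz⟩ hq.totalDim_le)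
  exact (isVertexMono_of_isIso q).comp hm

theorem comp_eq_zero_of_minimalFor_isEndImage (hX : Indec X) {I : QRep k Q}
    (hI : MinimalFor (IsEndImage X) totalDim I) (hlt : totalDim I < totalDim X) {m : I ⟶ X}
    (hm : IsVertexMono m) (p : X ⟶ I) : m ≫ p = 0 := by
  by_contra hmp
  have := (isVertexMono_of_minimalFor_isEndImage hI hm hmp).isIso le_rfl
  have hretract : Retract I X := ⟨m, p ≫ inv (m ≫ p), by rw [← Category.assoc, IsIso.hom_inv_id]⟩
  exact hlt.not_ge (hX.totalDim_le_of_retract hretract hI.1.1)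

/-- Ringel's descent: take `I` of least dimension among the images of nonzero endomorphisms of
`X`. It embeds into the kernel of `X ⟶ I`, and in fact into an indecomposable summand `Y` of that
kernel. If `Ext(Y, Y)` vanished, so would `Ext(I, Y)`, making `Y` a summand of `X`. -/
theorem Indec.exists_totalDim_lt_extDim_ne_zero (hX : Indec X) (hWX : RPerp W X) {f : X ⟶ X}
    (hf : f ≠ 0) (hf' : ¬ IsIso f) :
    ∃ Y, Indec Y ∧ RPerp W Y ∧ totalDim Y < totalDim X ∧ extDim Y Y ≠ 0 := by
  obtain ⟨J, hJ, hJX⟩ := exists_isEndImage_totalDim_lt hf hf'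
  obtain ⟨I, hI⟩ := exists_minimalFor_of_wellFoundedLT (IsEndImage X) totalDim ⟨J, hJ⟩
  have hIX : totalDim I < totalDim X := ((le_total _ _).elim id (hI.2 hJ)).trans_lt hJX
  obtain ⟨hI_ne, ⟨p, hp⟩, m, hm⟩ := hI.1
  obtain ⟨K, f, hfp⟩ := hp.exists_isShortExact
  obtain ⟨j, rfl⟩ := hfp.exists_comp_eq (comp_eq_zero_of_minimalFor_isEndImage hX hI hIX hm p)
  have := hp.epi
  have := hm.mono
  have hj : j ≠ 0 := by
    rintro rfl
    exact hI_ne (by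
      rw [← cancel_mono (0 ≫ f), Limits.zero_comp, Limits.comp_zero, Limits.comp_zero])
  have hp_ne : p ≠ 0 := by
    rintro rfl
    exact hI_ne (by rw [← cancel_epi (0 : X ⟶ I), Limits.zero_comp, Limits.zero_comp])
  have hKX : totalDim K < totalDim X := hfp.totalDim_lt hp_ne
  obtain ⟨Y, r, hY, hjr⟩ := exists_indec_retract_comp_ne_zero hj
  have hWK : RPerp W K := by
    have := hfp.isVertexMono.mono
    exact ⟨homDim_eq_zero_of_mono f hWX.1,
      hfp.extDim_eq_zero (homDim_eq_zero_of_mono (j ≫ f) hWX.1) hWX.2⟩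
  have hYK : totalDim Y ≤ totalDim K := (isVertexMono_retract_i r).totalDim_le
  refine ⟨Y, hY, hWK.of_retract_right r, hYK.trans_lt hKX, fun hYY ↦ ?_⟩
  have hjr_mono : IsVertexMono (j ≫ r.r) := isVertexMono_of_minimalFor_isEndImage hI
    ((isVertexMono_retract_i r).comp hfp.isVertexMono) hjr
  obtain ⟨b, hb⟩ := hfp.exists_comp_eq_of_extDim_eq_zero
    (extDim_eq_zero_of_isVertexMono hjr_mono hYY) r.r
  have hretract : Retract Y X := ⟨r.i ≫ f, b, by rw [Category.assoc, hb, r.retract]⟩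
  exact (hYK.trans_lt hKX).not_ge (hX.totalDim_le_of_retract hretract (indec_iff.1 hY).1)

/-! ### Bricks -/

/-- A representation whose endomorphism ring is a division ring. -/
def IsBrick (M : QRep k Q) : Prop := ∀ f : M ⟶ M, IsIso f ↔ f ≠ 0

theorem isBrick_of_homDim_eq_one (h : homDim M M = 1) : IsBrick M := by
  have hM : 𝟙 M ≠ 0 := fun h0 ↦ by
    rw [homDim_eq_zero_iff.2 fun f ↦ by rw [← Category.comp_id f, h0, Limits.comp_zero]] at h
    exact zero_ne_one h
  refine fun f ↦ ⟨?_, fun hf ↦ ?_⟩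
  · rintro hf rfl
    exact hM (by rw [← IsIso.hom_inv_id (0 : M ⟶ M), Limits.zero_comp])
  · obtain ⟨c, rfl⟩ := exists_smul_eq_of_finrank_eq_one h hM f
    have hc : c ≠ 0 := left_ne_zero_of_smul hf
    exact ⟨c⁻¹ • 𝟙 M, by simp [smul_smul, hc], by simp [smul_smul, hc]⟩

theorem IsBrick.homDim_self [IsAlgClosed k] (hM : IsBrick M) : homDim M M = 1 :=
  finrank_endomorphism_eq_one k hM

theorem IsBrick.extDim_self_eq_zero [IsAlgClosed k] (hM : IsBrick M)
    (h : 0 < Q.euler M.dimVec M.dimVec) : extDim M M = 0 := by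
  have := euler_dimVec M M
  rw [hM.homDim_self] at this
  omega

theorem RPerp.euler_dimVec_eq_zero (h : RPerp W X) : Q.euler W.dimVec X.dimVec = 0 := by
  rw [euler_dimVec, h.1, h.2, sub_self]

theorem Indec.dimVec_ne_zero (hX : Indec X) : X.dimVec ≠ 0 := by
  obtain ⟨i, hi⟩ := hX.1
  exact fun h ↦ hi (Nat.cast_eq_zero.1 (congrFun h i : (X.d i : ℤ) = 0))

theorem Indec.isBrick_of_rPerp [IsAlgClosed k]
    (hpos : ∀ d, d ≠ 0 → Q.euler W.dimVec d = 0 → 0 < Q.euler d d) (hX : Indec X)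
    (hWX : RPerp W X) : IsBrick X := by
  induction hn : totalDim X using Nat.strong_induction_on generalizing X with
  | _ n ih =>
  subst hn
  refine fun f ↦ ⟨?_, fun hf ↦ ?_⟩
  · rintro hf rfl
    exact (indec_iff.1 hX).1 (by rw [← IsIso.hom_inv_id (0 : X ⟶ X), Limits.zero_comp])
  · by_contra hf'
    obtain ⟨Y, hY, hWY, hlt, hYY⟩ := hX.exists_totalDim_lt_extDim_ne_zero hWX hf hf'
    exact hYY ((ih _ hlt hY hWY rfl).extDim_self_eq_zero
      (hpos _ hY.dimVec_ne_zero hWY.euler_dimVec_eq_zero))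

/-- The Happel–Ringel lemma. Let `f = p ≫ m` through its image `I`, and let `s` be a vertexwise
retraction of `m`. As `Ext(N, M) = 0`, the cocycle `extMap N I s` is the image under `p` of the
coboundary of some `h`, so that `s - p * h : N ⟶ I` and `h * m : I ⟶ M` are morphisms, and they
decompose `𝟙 I`. -/
theorem isVertexMono_or_isVertexEpi_of_ne_zero (hM : IsBrick M) (hN : IsBrick N)
    (hNM : extDim N M = 0) {f : M ⟶ N} (hf : f ≠ 0) : IsVertexMono f ∨ IsVertexEpi f := by
  obtain ⟨I, p, m, ⟨t, ht⟩, ⟨s, hs⟩, rfl⟩ := exists_vertexEpi_comp_vertexMono f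
  obtain ⟨h, hh⟩ := extDim_eq_zero_iff.1 hNM fun x ↦ t (Q.tgt x) * extMap N I s x
  obtain ⟨a, ha⟩ : ∃ a : N ⟶ I, app a = s - fun i ↦ app p i * h i := by
    refine exists_app_eq_of_extMap_eq_zero ?_
    rw [map_sub, extMap_app_mul, hh, sub_eq_zero]
    exact funext fun x ↦ by rw [← Matrix.mul_assoc, ht, Matrix.one_mul]
  obtain ⟨b, hb⟩ : ∃ b : I ⟶ M, app b = fun i ↦ h i * app m i := by
    refine exists_app_eq_of_extMap_eq_zero ?_
    have hsm : extMap I I (fun i ↦ s i * app m i) = 0 := by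
      rw [funext hs]
      exact extMap_app (𝟙 I)
    rw [extMap_mul_app, hh]
    rw [extMap_mul_app] at hsm
    funext x
    rw [Matrix.mul_assoc, congrFun hsm x, Pi.zero_apply, Matrix.mul_zero, Pi.zero_apply]
  have hsum : m ≫ a + b ≫ p = 𝟙 I := hom_ext fun i ↦ by
    simp only [app_add, app_comp, ha, hb, Pi.sub_apply, Matrix.sub_mul, hs, Matrix.mul_assoc,
      sub_add_cancel, app_id]
  by_cases hpb : p ≫ b = 0
  · have hpma : p ≫ m ≫ a = p := by
      calc p ≫ m ≫ a = p ≫ (m ≫ a + b ≫ p) := by simp [reassoc_of% hpb]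
        _ = p := by rw [hsum, Category.comp_id]
    have ham : a ≫ m ≠ 0 := fun h0 ↦ hf (by
      rw [← hpma, Category.assoc, Category.assoc, h0, Limits.comp_zero, Limits.comp_zero])
    have := (hN _).2 ham
    exact .inr (IsVertexEpi.comp ⟨t, ht⟩ (isVertexEpi_of_comp (isVertexEpi_of_isIso (a ≫ m))))
  · have := (hM _).2 hpb
    exact .inl ((isVertexMono_of_comp (isVertexMono_of_isIso (p ≫ b))).comp ⟨s, hs⟩)

theorem IsBrick.nonempty_iso (hM : IsBrick M) (hN : IsBrick N) (hNM : extDim N M = 0)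
    (hd : M.d = N.d) (hpos : 0 < Q.euler M.dimVec N.dimVec) : Nonempty (M ≅ N) := by
  obtain ⟨f, hf⟩ : ∃ f : M ⟶ N, f ≠ 0 := by
    by_contra! h
    have := euler_dimVec M N
    rw [homDim_eq_zero_iff.2 h] at this
    omega
  have hMN : totalDim M = totalDim N := by rw [totalDim, hd, totalDim]
  have : IsIso f := (isVertexMono_or_isVertexEpi_of_ne_zero hM hN hNM hf).elim
    (·.isIso hMN.ge) (·.isIso hMN.le)
  exact ⟨asIso f⟩

theorem extMap_add_smul {d d' : Fin Q.n → ℕ}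
    (m n : ∀ x, Matrix (Fin (d (Q.tgt x))) (Fin (d (Q.src x))) k)
    (m' n' : ∀ x, Matrix (Fin (d' (Q.tgt x))) (Fin (d' (Q.src x))) k) (t : k) :
    extMap (⟨d, m + t • n⟩ : QRep k Q) ⟨d', m' + t • n'⟩ =
      extMap (⟨d, m⟩ : QRep k Q) ⟨d', m'⟩ + t • extMap (⟨d, n⟩ : QRep k Q) ⟨d', n'⟩ := by
  refine LinearMap.ext fun h ↦ funext fun x ↦ ?_
  simp only [extMap, LinearMap.coe_mk, AddHom.coe_mk, LinearMap.add_apply, LinearMap.smul_apply,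
    Pi.add_apply, Pi.smul_apply, Matrix.mul_add, Matrix.add_mul, Matrix.mul_smul, Matrix.smul_mul,
    smul_sub]
  abel

theorem finite_setOf_extDim_ne_zero {d d' : Fin Q.n → ℕ}
    (m n : ∀ x, Matrix (Fin (d (Q.tgt x))) (Fin (d (Q.src x))) k)
    (m' n' : ∀ x, Matrix (Fin (d' (Q.tgt x))) (Fin (d' (Q.src x))) k) {t₀ : k}
    (h : extDim (⟨d, m + t₀ • n⟩ : QRep k Q) ⟨d', m' + t₀ • n'⟩ = 0) :
    {t : k | extDim (⟨d, m + t • n⟩ : QRep k Q) ⟨d', m' + t • n'⟩ ≠ 0}.Finite := by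
  simp only [extDim_eq_zero_iff, extMap_add_smul, ne_eq] at h ⊢
  exact finite_setOf_not_surjective_add_smul _ _ h

/-- A generic point of the line joining `M` and `N` in the space of representations. -/
theorem exists_extDim_eq_zero_of_d_eq [Infinite k] (h : M.d = N.d) (hM : extDim M M = 0)
    (hN : extDim N N = 0) :
    ∃ L : QRep k Q, L.d = M.d ∧ extDim L L = 0 ∧ extDim L M = 0 ∧ extDim L N = 0 := by
  obtain ⟨d, m⟩ := M
  obtain ⟨_, m'⟩ := N
  obtain rfl : d = _ := h
  have hLL := finite_setOf_extDim_ne_zero m (m' - m) m (m' - m) (t₀ := 0) (by simpa using hM)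
  have hLM := finite_setOf_extDim_ne_zero m (m' - m) m 0 (t₀ := 0) (by simpa using hM)
  have hLN := finite_setOf_extDim_ne_zero m (m' - m) m' 0 (t₀ := 1) (by simpa using hN)
  obtain ⟨t, ht⟩ := ((hLL.union hLM).union hLN).exists_notMem
  simp only [smul_zero, add_zero, Set.mem_union, Set.mem_ofPred_eq, not_or, not_not] at ht
  exact ⟨⟨d, m + t • (m' - m)⟩, rfl, ht.1.1, ht.1.2, ht.2⟩

theorem IsBrick.isoRep_of_dimVec_eq [IsAlgClosed k] (hM : IsBrick M) (hN : IsBrick N)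
    (hMM : extDim M M = 0) (hNN : extDim N N = 0) (h : M.dimVec = N.dimVec) : IsoRep M N := by
  have hd : M.d = N.d := funext fun i ↦ Nat.cast_injective (congrFun h i : (M.d i : ℤ) = N.d i)
  obtain ⟨L, hL, hLL, hLM, hLN⟩ := exists_extDim_eq_zero_of_d_eq hd hMM hNN
  have hLv : L.dimVec = M.dimVec := funext fun i ↦ congrArg Nat.cast (congrFun hL i)
  have hq : Q.euler M.dimVec M.dimVec = 1 := by
    rw [euler_dimVec, hM.homDim_self, hMM, Nat.cast_one, Nat.cast_zero, sub_zero]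
  have hL_brick : IsBrick L := isBrick_of_homDim_eq_one (by
    have := euler_dimVec L L
    rw [hLv, hq, hLL] at this
    omega)
  obtain ⟨eM⟩ := hM.nonempty_iso hL_brick hLM hL.symm (by rw [hLv, hq]; exact one_pos)
  obtain ⟨eN⟩ := hN.nonempty_iso hL_brick hLN (hd.symm.trans hL.symm)
    (by rw [hLv, ← h, hq]; exact one_pos)
  exact isoRep_of_iso (eM.trans eN.symm)

end QRep

open QRep in
theorem perp_finite_of_nonregular_summand_general {k : Type} [Field k] [IsAlgClosed k]
    {Q : FinQuiver} {V W : QRep k Q} (hW : IsSummand W V)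
    (hpos : ∀ d, d ≠ 0 → Q.euler W.dimVec d = 0 → 0 < Q.euler d d) :
    (∀ M : QRep k Q, Indec M → RPerp V M → extDim M M = 0) ∧
      ∃ l : List (QRep k Q), ∀ M : QRep k Q, Indec M → RPerp V M →
        ∃ N ∈ l, IsoRep M N := by
  obtain ⟨r⟩ := isSummand_iff_nonempty_retract.1 hW
  have hbrick {M : QRep k Q} (hM : Indec M) (hVM : RPerp V M) : IsBrick M :=
    hM.isBrick_of_rPerp hpos (hVM.of_retract_left r)
  have hWM {M : QRep k Q} (hVM : RPerp V M) : Q.euler W.dimVec M.dimVec = 0 :=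
    (hVM.of_retract_left r).euler_dimVec_eq_zero
  have hext {M : QRep k Q} (hM : Indec M) (hVM : RPerp V M) : extDim M M = 0 :=
    (hbrick hM hVM).extDim_self_eq_zero (hpos _ hM.dimVec_ne_zero (hWM hVM))
  refine ⟨fun M hM hVM ↦ hext hM hVM, ?_⟩
  have hfin : (dimVec '' {M : QRep k Q | Indec M ∧ RPerp V M}).Finite := by
    refine (FinQuiver.finite_setOf_euler_self_le hpos 1).subset ?_
    rintro _ ⟨M, ⟨hM, hVM⟩, rfl⟩
    refine ⟨hWM hVM, ?_⟩
    rw [euler_dimVec, (hbrick hM hVM).homDim_self, hext hM hVM, Nat.cast_one, Nat.cast_zero,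
      sub_zero]
  obtain ⟨l, hl⟩ := exists_list_forall_mem_apply_eq hfin
  refine ⟨l, fun M hM hVM ↦ ?_⟩
  obtain ⟨N, hNl, ⟨hN, hVN⟩, hMN⟩ := hl M ⟨hM, hVM⟩
  exact ⟨N, hNl, (hbrick hM hVM).isoRep_of_dimVec_eq (hbrick hN hVN) (hext hM hVM)
    (hext hN hVN) hMN.symm⟩

open QRep in
/-- over a Euclidean quiver, if a rigid `V` has a non-regular
indecomposable summand, then `V^⊥` contains no non-exceptional indecomposables
and has only finitely many indecomposables up to isomorphism. -/
theorem perp_finite_of_nonregular_summand (k : Type) [Field k] [IsAlgClosed k]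
    (Q : FinQuiver) (hQ : Q.IsEuclidean) (δ : Fin Q.n → ℤ) (hδ : Q.IsNullRoot δ)
    (V : QRep k Q) (hV : extDim V V = 0)
    (W : QRep k Q) (hW : IsSummand W V) (hWind : Indec W)
    (hWnr : Q.euler δ W.dimVec ≠ 0) :
    (∀ M : QRep k Q, Indec M → RPerp V M → extDim M M = 0) ∧
      ∃ l : List (QRep k Q), ∀ M : QRep k Q, Indec M → RPerp V M →
        ∃ N ∈ l, IsoRep M N :=
  perp_finite_of_nonregular_summand_general hW fun _ hd hwd ↦
    hδ.euler_self_pos hQ.2.2.1 hWnr hd hwd
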